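/- arXiv:math/0612331 — 2 statements merged into one kernel-verified Lean document; each statement's English description precedes it below -/
import Mathlib

section
/- Let F be a field with F ≠ F₂ (i.e., F has more than two elements). Then mr(F, full house) = 2, where the full house is the graph on vertex set {1,2,3,4,5} with edge set {12, 13, 23, 24, 25, 34, 35, 45}. -/
/-!
The rank is at least `2` because the rows `0, 4` and the columns `1, 3` cut out a triangular
submatrix with nonzero diagonal: `01` and `43` are edges, `03` is not.

For the upper bound, the full house is the union of the cliques `S₀ = {0, 1, 2}` and
`S₁ = {1, 2, 3, 4}`. If `J k` denotes the `0`-`1` matrix supported on `S k × S k`, then every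
combination `∑ k, c k • J k` has rank at most the number of cliques, and each of its entries is a
subset sum of `c`. The graph is recovered as soon as no nonempty subset sum of `c` vanishes; for two
cliques `c = (1, -a)` works when `a ≠ 0, 1`, and such an `a` is exactly what `F₂` lacks.
-/

open Matrix

/-- `A` is a symmetric matrix over `F` whose off-diagonal nonzero pattern is
given by the graph `G` (diagonal entries are unconstrained). -/
def IsGraphMatrix (F : Type*) [Field F] {V : Type*} (G : SimpleGraph V)
    (A : Matrix V V F) : Prop :=
  A.IsSymm ∧ ∀ i j : V, i ≠ j → (A i j ≠ 0 ↔ G.Adj i j)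

/-- The minimum rank `mr(F, G)` of the graph `G` over the field `F`. -/
noncomputable def minRank (F : Type*) [Field F] {V : Type*} [Fintype V]
    (G : SimpleGraph V) : ℕ :=
  sInf {r : ℕ | ∃ A : Matrix V V F, IsGraphMatrix F G A ∧ A.rank = r}

/-- The full house graph: vertices `{0, 1, 2, 3, 4}` with edges
`01, 02, 12, 13, 14, 23, 24, 34` (the graph `12, 13, 23, 24, 25, 34, 35, 45`
on `{1, …, 5}` in 1-indexed notation). -/
def fullHouse : SimpleGraph (Fin 5) :=
  SimpleGraph.fromEdgeSet {s(0,1), s(0,2), s(1,2), s(1,3), s(1,4), s(2,3), s(2,4), s(3,4)}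

theorem card_le_rank_of_isLowerTriangular_submatrix {R m n ι : Type*} [CommRing R] [IsDomain R]
    [Fintype n] [Fintype ι] [LinearOrder ι] {A : Matrix m n R} {r : ι → m} {c : ι → n}
    (hA : (A.submatrix r c).IsLowerTriangular) (hdiag : ∀ k, A (r k) (c k) ≠ 0) :
    Fintype.card ι ≤ A.rank := by
  have hdet : (A.submatrix r c).det ≠ 0 := by
    rw [det_of_isLowerTriangular _ hA]
    exact Finset.prod_ne_zero_iff.2 fun k _ ↦ hdiag k
  calc Fintype.card ι = (A.submatrix r c).rank := (rank_of_det_ne_zero hdet).symm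
    _ ≤ A.rank := rank_submatrix_le A r c

section MinRank

variable {F V : Type*} [Field F] {G : SimpleGraph V}

theorem isGraphMatrix_adjMatrix [DecidableRel G.Adj] : IsGraphMatrix F G (G.adjMatrix F) :=
  ⟨G.isSymm_adjMatrix, fun i j _ ↦ by simp [SimpleGraph.adjMatrix_apply]⟩

variable [Fintype V]

theorem IsGraphMatrix.minRank_le_rank {A : Matrix V V F} (hA : IsGraphMatrix F G A) :
    minRank F G ≤ A.rank :=
  Nat.sInf_le ⟨A, hA, rfl⟩

theorem le_minRank {n : ℕ} (h : ∀ A : Matrix V V F, IsGraphMatrix F G A → n ≤ A.rank) :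
    n ≤ minRank F G := by
  classical
  refine le_csInf ⟨_, G.adjMatrix F, isGraphMatrix_adjMatrix, rfl⟩ ?_
  rintro _ ⟨A, hA, rfl⟩
  exact h A hA

theorem card_le_minRank_of_triangular {ι : Type*} [Fintype ι] [LinearOrder ι] (r c : ι → V)
    (hdiag : ∀ k, G.Adj (r k) (c k))
    (hupper : ∀ k l, k < l → r k ≠ c l ∧ ¬ G.Adj (r k) (c l)) :
    Fintype.card ι ≤ minRank F G := by
  refine le_minRank fun A hA ↦ card_le_rank_of_isLowerTriangular_submatrix (r := r) (c := c) ?_ ?_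
  · intro k l hkl
    obtain ⟨hne, hnadj⟩ := hupper k l hkl
    exact not_not.1 ((hA.2 _ _ hne).not.2 hnadj)
  · exact fun k ↦ (hA.2 _ _ (hdiag k).ne).2 (hdiag k)

end MinRank

section CliqueMatrix

variable {R V ι : Type*} [Fintype ι]

open scoped Classical in
/-- The linear combination, with coefficients `c k`, of the `0`-`1` matrices supported on
`S k × S k`, written entrywise to exhibit every entry as a subset sum of `c`. -/
noncomputable def weightedCliqueMatrix [AddCommMonoid R] (S : ι → Set V) (c : ι → R) :
    Matrix V V R :=
  of fun i j ↦ ∑ k with i ∈ S k ∧ j ∈ S k, c k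

theorem isSymm_weightedCliqueMatrix [AddCommMonoid R] (S : ι → Set V) (c : ι → R) :
    (weightedCliqueMatrix S c).IsSymm := by
  classical
  ext i j
  exact Finset.sum_congr (Finset.filter_congr fun _ _ ↦ and_comm) fun _ _ ↦ rfl

theorem rank_weightedCliqueMatrix_le [CommSemiring R] [StrongRankCondition R] [Fintype V]
    (S : ι → Set V) (c : ι → R) : (weightedCliqueMatrix S c).rank ≤ Fintype.card ι := by
  classical
  let U : Matrix V ι R := of fun i k ↦ if i ∈ S k then 1 else 0
  let W : Matrix ι V R := of fun k j ↦ if j ∈ S k then c k else 0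
  have hUW : weightedCliqueMatrix S c = U * W := by
    ext i j
    simp [weightedCliqueMatrix, U, W, mul_apply, Finset.sum_filter, ← ite_and, and_comm]
  calc (weightedCliqueMatrix S c).rank = (U * W).rank := by rw [hUW]
    _ ≤ U.rank := rank_mul_le_left U W
    _ ≤ Fintype.card ι := rank_le_card_width U

end CliqueMatrix

section EdgeCliqueCover

variable {F V ι : Type*} [Field F] {G : SimpleGraph V}

/-- The sets `S k` are cliques of `G` that together contain every edge of `G`. They need not be
distinct, nor cover the isolated vertices. -/
def IsEdgeCliqueCover (G : SimpleGraph V) (S : ι → Set V) : Prop :=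
  ∀ i j, G.Adj i j ↔ i ≠ j ∧ ∃ k, i ∈ S k ∧ j ∈ S k

variable [Fintype ι]

theorem IsEdgeCliqueCover.isGraphMatrix_weightedCliqueMatrix {S : ι → Set V}
    (hS : IsEdgeCliqueCover G S) {c : ι → F}
    (hc : ∀ s : Finset ι, s.Nonempty → ∑ k ∈ s, c k ≠ 0) :
    IsGraphMatrix F G (weightedCliqueMatrix S c) := by
  classical
  refine ⟨isSymm_weightedCliqueMatrix S c, fun i j hij ↦ ?_⟩
  have hsum (s : Finset ι) : ∑ k ∈ s, c k ≠ 0 ↔ s.Nonempty :=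
    ⟨Finset.nonempty_of_sum_ne_zero, hc s⟩
  simp [weightedCliqueMatrix, hsum, hS i j, hij, Finset.filter_nonempty_iff]

theorem IsEdgeCliqueCover.minRank_le_card [Fintype V] {S : ι → Set V}
    (hS : IsEdgeCliqueCover G S) {c : ι → F}
    (hc : ∀ s : Finset ι, s.Nonempty → ∑ k ∈ s, c k ≠ 0) :
    minRank F G ≤ Fintype.card ι :=
  (hS.isGraphMatrix_weightedCliqueMatrix hc).minRank_le_rank.trans
    (rank_weightedCliqueMatrix_le S c)

end EdgeCliqueCover

theorem sum_vec_one_neg_ne_zero {R : Type*} [Ring R] {a : R} (ha₀ : a ≠ 0) (ha₁ : a ≠ 1)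
    (s : Finset (Fin 2)) (hs : s.Nonempty) : ∑ k ∈ s, ![1, -a] k ≠ 0 := by
  have : Nontrivial R := ⟨a, 0, ha₀⟩
  have hsub : 1 + -a ≠ 0 := by simpa [← sub_eq_add_neg, sub_eq_zero] using ha₁.symm
  obtain rfl | rfl | rfl : s = {0} ∨ s = {1} ∨ s = {0, 1} := by revert s; decide
  all_goals simp [ha₀, hsub]

theorem isEdgeCliqueCover_fullHouse :
    IsEdgeCliqueCover fullHouse ![{0, 1, 2}, {1, 2, 3, 4}] := by
  intro i j
  fin_cases i <;> fin_cases j <;> simp [fullHouse]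

/-- If `F` is a field other than `F₂` (i.e. `F` has more than two elements), then
the minimum rank of the full house graph over `F` is `2`. -/
theorem minRank_fullHouse_of_ne_F2 (F : Type*) [Field F] (hF : ∃ a : F, a ≠ 0 ∧ a ≠ 1) :
    minRank F fullHouse = 2 := by
  obtain ⟨a, ha₀, ha₁⟩ := hF
  have hupper : minRank F fullHouse ≤ 2 :=
    isEdgeCliqueCover_fullHouse.minRank_le_card (sum_vec_one_neg_ne_zero ha₀ ha₁)
  have hlower : 2 ≤ minRank F fullHouse :=
    card_le_minRank_of_triangular (ι := Fin 2) ![0, 4] ![1, 3]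
      (by simp [Fin.forall_fin_two, fullHouse]) (by simp [Fin.forall_fin_two, fullHouse])
  exact le_antisymm hupper hlower
end

section
/- If G ∈ F₄(F₂, ⋉), then |V(G)| ≤ 8. Here ⋉ is the graph on vertex set {1,2,3,4,5} with edge set {12, 13, 14, 15, 45} (a triangle on {1,4,5} with two pendant vertices 2 and 3 attached to vertex 1). -/
/-!
Order the rows so that the vertices `0, 1, 3` of the copy of `⋉` come first. A matrix of rank at
most `3` over `F₂` with the pattern of `⋉` carries one of three diagonals on these vertices, and the
corresponding principal `3 × 3` submatrix is invertible; the rank is then at most `3` exactly when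
its Schur complement vanishes. Since the remaining diagonal entries are free, `mr(F₂, G) ≤ 3` holds
iff one of three conflict graphs (the off-diagonal supports of the Schur complements) is empty.

The inverses of the three submatrices differ by rank-one matrices `w wᵀ`, so passing from one
conflict graph to the next complements the edges inside a single vertex set. This structure yields
three vertices which, together with the vertex `2` of the copy, contain an edge of every conflict
graph. If `G` had nine vertices, some vertex `w` outside these three and the five of the copy could
be deleted without destroying these edges, so that `mr(F₂, G - w) ≥ 4`, contradicting
`G ∈ F₄(F₂, ⋉)`.
-/

open Matrix

/-- The graph `G - v` obtained from `G` by deleting the vertex `v`. -/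
def deleteVert {V : Type*} (G : SimpleGraph V) (v : V) : SimpleGraph {u : V // u ≠ v} :=
  SimpleGraph.comap Subtype.val G

/-- `G ∈ F_K(F, H)`: `G` contains `H` as an induced subgraph, `mr(F, G) ≥ K`, and for
some induced copy of `H` in `G` (an embedding `f : H ↪g G`), `mr(F, G - v) ≤ K - 1`
for every vertex `v` of `G` outside that copy. -/
def MemForbRel (F : Type*) [Field F] (K : ℕ) {VH VG : Type*} [Fintype VH] [Fintype VG]
    [DecidableEq VG] (H : SimpleGraph VH) (G : SimpleGraph VG) : Prop :=
  K ≤ minRank F G ∧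
    ∃ f : H ↪g G, ∀ v : VG, v ∉ Set.range f → minRank F (deleteVert G v) + 1 ≤ K

/-- The graph `⋉` on `{0, 1, 2, 3, 4}` with edges `01, 02, 03, 04, 34`
(edges `12, 13, 14, 15, 45` on `{1, …, 5}` in 1-indexed notation): a triangle on
`{0, 3, 4}` with the two pendant vertices `1` and `2` attached to vertex `0`. -/
def ltimesGraph : SimpleGraph (Fin 5) :=
  SimpleGraph.fromEdgeSet {s(0,1), s(0,2), s(0,3), s(0,4), s(3,4)}

section SchurComplement

variable {K V W ι : Type*} [Field K] [Fintype ι] [DecidableEq ι]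

/-- The Schur complement `A - A[·,b] A[b,b]⁻¹ A[b,·]` of the principal submatrix of `A` indexed by
`b`. It keeps the index type of `A`, so the rows and columns in the range of `b` become zero rather
than being removed. It is meaningful only when `A[b,b]` is invertible. -/
noncomputable def schurComplement (A : Matrix V V K) (b : ι → V) : Matrix V V K :=
  A - A.submatrix id b * (A.submatrix b b)⁻¹ * A.submatrix b id

lemma schurComplement_apply (A : Matrix V V K) (b : ι → V) (u v : V) :
    schurComplement A b u v =
      A u v - (fun j => A u (b j)) ⬝ᵥ ((A.submatrix b b)⁻¹ *ᵥ fun j => A (b j) v) := by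
  rw [dotProduct_mulVec]
  rfl

lemma schurComplement_submatrix (A : Matrix W W K) (g : V → W) (b : ι → V) :
    schurComplement (A.submatrix g g) b = (schurComplement A (g ∘ b)).submatrix g g :=
  rfl

lemma isSymm_schurComplement {A : Matrix V V K} (hA : A.IsSymm) (b : ι → V) :
    (schurComplement A b).IsSymm := by
  refine hA.sub ?_
  rw [IsSymm, transpose_mul, transpose_mul, transpose_submatrix, transpose_submatrix, hA.eq,
    (hA.submatrix b).inv.eq, Matrix.mul_assoc]

lemma schurComplement_apply_base {A : Matrix V V K} {b : ι → V}
    (hb : IsUnit (A.submatrix b b)) (j : ι) (v : V) : schurComplement A b (b j) v = 0 := by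
  have hcancel : A.submatrix b b * (A.submatrix b b)⁻¹ * A.submatrix b id = A.submatrix b id := by
    rw [mul_nonsing_inv _ ((isUnit_iff_isUnit_det _).1 hb), Matrix.one_mul]
  exact sub_eq_zero_of_eq (congrFun (congrFun hcancel j) v).symm

lemma schurComplement_add_diagonal [DecidableEq V] (A : Matrix V V K) {b : ι → V} {ε : V → K}
    (hε : ∀ j, ε (b j) = 0) :
    schurComplement (A + diagonal ε) b = schurComplement A b + diagonal ε := by
  have hrow (j : ι) (v : V) : (A + diagonal ε) (b j) v = A (b j) v := by
    simp [diagonal_apply, hε]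
  have hcol (j : ι) (u : V) : (A + diagonal ε) u (b j) = A u (b j) := by
    simp +contextual [diagonal_apply, hε]
  have hbase : (A + diagonal ε).submatrix b b = A.submatrix b b := by
    ext j k
    exact hrow j (b k)
  ext u v
  rw [Matrix.add_apply, schurComplement_apply, schurComplement_apply, hbase]
  simp only [hrow, hcol, Matrix.add_apply]
  abel

lemma det_submatrix_eq_zero_of_rank_lt [Fintype W] {A : Matrix W W K} (r c : ι → W)
    (hA : A.rank < Fintype.card ι) : (A.submatrix r c).det = 0 := by
  by_contra hdet
  have hcard := (rank_of_det_ne_zero hdet).symm.trans_le (rank_submatrix_le A r c)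
  exact hA.not_ge hcard

lemma rank_le_card_iff_schurComplement_eq_zero [Fintype V] {A : Matrix V V K} {b : ι → V}
    (hb : IsUnit (A.submatrix b b)) :
    A.rank ≤ Fintype.card ι ↔ schurComplement A b = 0 := by
  constructor
  · intro hrank
    ext u v
    let := hb.invertible
    let bordered := A.submatrix (Sum.elim b fun _ : Unit => u) (Sum.elim b fun _ : Unit => v)
    have hsingular : bordered.det = 0 := det_submatrix_eq_zero_of_rank_lt _ _ <| by
      simpa only [Fintype.card_sum, Fintype.card_unit] using Nat.lt_succ_of_le hrank
    have hblocks : bordered = fromBlocks (A.submatrix b b) (A.submatrix b fun _ => v)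
        (A.submatrix (fun _ => u) b) (A.submatrix (fun _ => u) fun _ => v) := by
      ext (_ | _) (_ | _) <;> rfl
    rw [hblocks, det_fromBlocks₁₁, invOf_eq_nonsing_inv, det_unique (n := Unit)] at hsingular
    exact (mul_eq_zero.1 hsingular).resolve_left ((isUnit_iff_isUnit_det _).1 hb).ne_zero
  · intro hzero
    rw [sub_eq_zero.1 hzero, Matrix.mul_assoc]
    exact (rank_mul_le_left _ _).trans (rank_le_card_width _)

end SchurComplement

section MinRank

lemma minRank_le_iff {F V : Type*} [Field F] [Fintype V] {G : SimpleGraph V} {r : ℕ} :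
    minRank F G ≤ r ↔ ∃ A : Matrix V V F, IsGraphMatrix F G A ∧ A.rank ≤ r := by
  classical
  constructor
  · intro hr
    have hadj : IsGraphMatrix F G (G.adjMatrix F) :=
      ⟨G.isSymm_adjMatrix, fun i j _ => by simp [SimpleGraph.adjMatrix_apply]⟩
    obtain ⟨A, hA, hrank⟩ : minRank F G ∈ {r | ∃ A, IsGraphMatrix F G A ∧ A.rank = r} :=
      Nat.sInf_mem ⟨_, G.adjMatrix F, hadj, rfl⟩
    exact ⟨A, hA, hrank.trans_le hr⟩
  · rintro ⟨A, hA, hrank⟩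
    have hmin : minRank F G ≤ A.rank := Nat.sInf_le ⟨A, hA, rfl⟩
    exact hmin.trans hrank

variable {V : Type*} [DecidableEq V] {G : SimpleGraph V} [DecidableRel G.Adj]

lemma isGraphMatrix_zmod_two_iff {A : Matrix V V (ZMod 2)} :
    IsGraphMatrix (ZMod 2) G A ↔ ∃ δ, A = G.adjMatrix (ZMod 2) + diagonal δ := by
  constructor
  · rintro ⟨-, hA⟩
    refine ⟨A.diag, ?_⟩
    ext u v
    by_cases huv : u = v
    · simp [huv]
    · have hbit (x : ZMod 2) : x ≠ 0 → x = 1 := Fin.eq_one_of_ne_zero x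
      by_cases hadj : G.Adj u v
      · simpa [huv, hadj] using hbit _ ((hA u v huv).2 hadj)
      · simpa [huv, hadj] using hA u v huv
  · rintro ⟨δ, rfl⟩
    exact ⟨G.isSymm_adjMatrix.add (isSymm_diagonal δ), fun u v huv => by simp [huv]⟩

lemma minRank_zmod_two_le_iff [Fintype V] {r : ℕ} :
    minRank (ZMod 2) G ≤ r ↔ ∃ δ, (G.adjMatrix (ZMod 2) + diagonal δ).rank ≤ r := by
  simp only [minRank_le_iff, isGraphMatrix_zmod_two_iff]
  constructor
  · rintro ⟨_, ⟨δ, rfl⟩, hrank⟩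
    exact ⟨δ, hrank⟩
  · rintro ⟨δ, hrank⟩
    exact ⟨_, ⟨δ, rfl⟩, hrank⟩

end MinRank

section ConflictGraph

variable {V W ι : Type*} [DecidableEq V] [DecidableEq W] (G : SimpleGraph V) [DecidableRel G.Adj]

/-- The matrix over `F₂` with the off-diagonal pattern of `G` and with the diagonal `d` on the
vertices `b`; the other diagonal entries are set to zero. -/
noncomputable def baseCompletion (b : ι → V) (d : ι → ZMod 2) : Matrix V V (ZMod 2) :=
  G.adjMatrix (ZMod 2) + diagonal (Function.extend b d 0)

lemma isSymm_baseCompletion (b : ι → V) (d : ι → ZMod 2) : (baseCompletion G b d).IsSymm :=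
  G.isSymm_adjMatrix.add (isSymm_diagonal _)

lemma baseCompletion_submatrix {b : ι → V} (hb : b.Injective) (d : ι → ZMod 2) [DecidableEq ι] :
    (baseCompletion G b d).submatrix b b = (G.adjMatrix (ZMod 2)).submatrix b b + diagonal d := by
  ext j k
  simp [baseCompletion, diagonal_apply, hb.eq_iff, hb.extend_apply]

variable {G} in
lemma baseCompletion_apply_base {b : ι → V} (d : ι → ZMod 2) {u : V} (hu : u ∉ Set.range b)
    (j : ι) : baseCompletion G b d u (b j) = G.adjMatrix (ZMod 2) u (b j) := by
  have hne : u ≠ b j := fun h => hu ⟨j, h.symm⟩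
  simp [baseCompletion, hne]

variable {G} in
lemma baseCompletion_submatrix_embedding {H : SimpleGraph W} [DecidableRel H.Adj] (f : G ↪g H)
    {b : ι → V} (hb : b.Injective) (d : ι → ZMod 2) :
    (baseCompletion H (f ∘ b) d).submatrix f f = baseCompletion G b d := by
  have hdiag (u : V) : Function.extend (f ∘ b) d 0 (f u) = Function.extend b d 0 u := by
    rw [hb.extend_comp f.injective, f.injective.extend_apply]
    rfl
  ext u v
  simp [baseCompletion, SimpleGraph.adjMatrix_apply, diagonal_apply, hdiag]

variable [Fintype ι] [DecidableEq ι]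

/-- The off-diagonal support of the Schur complement of the base `b` carrying the diagonal `d`. Its
edges are the pairs of vertices whose entry in the matrix of `G` differs from the one forced by the
rows of the base vertices when the rank is at most the size of the base. -/
def conflictGraph (b : ι → V) (d : ι → ZMod 2) : SimpleGraph V where
  Adj u v := u ≠ v ∧ schurComplement (baseCompletion G b d) b u v ≠ 0
  symm := ⟨fun u v h => ⟨h.1.symm, by
    rw [(isSymm_schurComplement (isSymm_baseCompletion G b d) b).apply]
    exact h.2⟩⟩
  loopless := ⟨fun _ h => h.1 rfl⟩

variable {G}

lemma conflictGraph_eq_comap {H : SimpleGraph W} [DecidableRel H.Adj] (f : G ↪g H)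
    {b : ι → V} (hb : b.Injective) (d : ι → ZMod 2) :
    conflictGraph G b d = (conflictGraph H (f ∘ b) d).comap f := by
  ext u v
  simp [conflictGraph, ← baseCompletion_submatrix_embedding f hb, schurComplement_submatrix]

lemma exists_diagonal_rank_le_card_iff [Fintype V] {b : ι → V} (hb : b.Injective)
    {d : ι → ZMod 2} (hunit : IsUnit ((baseCompletion G b d).submatrix b b)) :
    (∃ δ : V → ZMod 2, δ ∘ b = d ∧
      (G.adjMatrix (ZMod 2) + diagonal δ).rank ≤ Fintype.card ι) ↔ conflictGraph G b d = ⊥ := by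
  set S := schurComplement (baseCompletion G b d) b
  -- Diagonal entries off the base only affect the diagonal of the Schur complement.
  have hrank (ε : V → ZMod 2) (hε : ∀ j, ε (b j) = 0) :
      (baseCompletion G b d + diagonal ε).rank ≤ Fintype.card ι ↔ S + diagonal ε = 0 := by
    have hsub : (baseCompletion G b d + diagonal ε).submatrix b b =
        (baseCompletion G b d).submatrix b b := by
      ext j k
      simp [diagonal_apply, hε]
    rw [rank_le_card_iff_schurComplement_eq_zero (hsub ▸ hunit), schurComplement_add_diagonal _ hε]
  constructor
  · rintro ⟨δ, hδ, hδrank⟩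
    let ε := δ - Function.extend b d 0
    have hε (j : ι) : ε (b j) = 0 := by simp [ε, hb.extend_apply, ← hδ]
    have hS : S + diagonal ε = 0 := by
      rw [← hrank ε hε, baseCompletion, add_assoc, diagonal_add]
      simpa [ε] using hδrank
    ext u v
    simp only [conflictGraph, SimpleGraph.bot_adj, iff_false, not_and, not_not]
    intro huv
    simpa [huv] using congrFun (congrFun hS u) v
  · intro hbot
    have hS : S + diagonal S.diag = 0 := by
      ext u v
      by_cases huv : u = v
      · simp [huv, CharTwo.add_self_eq_zero]
      · have hadj : ¬ (conflictGraph G b d).Adj u v := by simp [hbot]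
        simpa [huv] using not_not.1 fun h => hadj ⟨huv, h⟩
    have hdiag (j : ι) : S.diag (b j) = 0 := schurComplement_apply_base hunit j (b j)
    refine ⟨Function.extend b d 0 + S.diag, ?_, ?_⟩
    · ext j
      simpa [hb.extend_apply] using hdiag j
    · have hS_rank := (hrank S.diag hdiag).2 hS
      rwa [baseCompletion, add_assoc, diagonal_add] at hS_rank

/-- `Γ` and `Δ` have the same edges except that inside the vertex set `T` they are complementary.
This is the effect on a conflict graph of a rank-one change of the inverse on the base. -/
def DifferByClique (Γ Δ : SimpleGraph V) (T : Set V) : Prop :=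
  ∀ ⦃u v⦄, u ≠ v → ((Γ.Adj u v ↔ Δ.Adj u v) ↔ ¬ (u ∈ T ∧ v ∈ T))

lemma not_conflictGraph_adj_base {b : ι → V} {d : ι → ZMod 2}
    (hunit : IsUnit ((baseCompletion G b d).submatrix b b)) (j : ι) (v : V) :
    ¬ (conflictGraph G b d).Adj (b j) v :=
  fun h => h.2 (schurComplement_apply_base hunit j v)

lemma conflictGraph_adj_iff {b : ι → V} {d : ι → ZMod 2} {u v : V} (hu : u ∉ Set.range b)
    (hv : v ∉ Set.range b) (huv : u ≠ v) :
    (conflictGraph G b d).Adj u v ↔ G.adjMatrix (ZMod 2) u v ≠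
      (G.adjMatrix (ZMod 2) u ∘ b) ⬝ᵥ
        (((baseCompletion G b d).submatrix b b)⁻¹ *ᵥ (G.adjMatrix (ZMod 2) v ∘ b)) := by
  have hentry : baseCompletion G b d u v = G.adjMatrix (ZMod 2) u v := by simp [baseCompletion, huv]
  simp only [conflictGraph, huv, ne_eq, not_false_eq_true, true_and, schurComplement_apply,
    sub_eq_zero, hentry, (isSymm_baseCompletion G b d).apply, baseCompletion_apply_base d hu,
    baseCompletion_apply_base d hv]
  rfl

lemma differByClique_conflictGraph {b : ι → V} {d d' : ι → ZMod 2} {w : ι → ZMod 2}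
    (hunit : IsUnit ((baseCompletion G b d).submatrix b b))
    (hunit' : IsUnit ((baseCompletion G b d').submatrix b b))
    (hinv : ((baseCompletion G b d).submatrix b b)⁻¹ =
      ((baseCompletion G b d').submatrix b b)⁻¹ + vecMulVec w w) :
    DifferByClique (conflictGraph G b d) (conflictGraph G b d')
      {u | u ∉ Set.range b ∧ (G.adjMatrix (ZMod 2) u ∘ b) ⬝ᵥ w = 1} := by
  intro u v huv
  by_cases hu : u ∈ Set.range b
  · obtain ⟨j, rfl⟩ := hu
    simp [not_conflictGraph_adj_base, hunit, hunit']
  by_cases hv : v ∈ Set.range b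
  · obtain ⟨j, rfl⟩ := hv
    simp [SimpleGraph.adj_comm _ u, not_conflictGraph_adj_base, hunit, hunit']
  have hbits (p q s t : ZMod 2) : ((p ≠ q + s * t) ↔ p ≠ q) ↔ ¬ (s = 1 ∧ t = 1) := by
    revert p q s t
    decide
  rw [conflictGraph_adj_iff hu hv huv, conflictGraph_adj_iff hu hv huv, hinv, add_mulVec,
    dotProduct_add, vecMulVec_mulVec, op_smul_eq_smul, dotProduct_smul, smul_eq_mul,
    dotProduct_comm w, mul_comm]
  simpa only [Set.mem_ofPred_eq, hu, hv, not_false_eq_true, true_and] using hbits _ _ _ _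

end ConflictGraph

section Clique

variable {V : Type*} {Γ₀ Γ₁ Γ₂ : SimpleGraph V} {S T : Set V} {c : V}

lemma not_isIndepSet_of_adj {Γ : SimpleGraph V} {u v : V} (h : Γ.Adj u v) {X : Set V} (hu : u ∈ X)
    (hv : v ∈ X) : ¬ Γ.IsIndepSet X :=
  fun hX => hX hu hv h.ne h

lemma DifferByClique.exists_three_not_isIndepSet (h : DifferByClique Γ₀ Γ₁ T) (h₀ : Γ₀ ≠ ⊥)
    (h₁ : Γ₁ ≠ ⊥) :
    ∃ x y z, ¬ Γ₀.IsIndepSet {x, y, z} ∧ ¬ Γ₁.IsIndepSet {x, y, z} := by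
  obtain ⟨p, q, hpq⟩ := SimpleGraph.ne_bot_iff_exists_adj.1 h₀
  obtain ⟨r, s, hrs⟩ := SimpleGraph.ne_bot_iff_exists_adj.1 h₁
  by_cases hpq' : Γ₁.Adj p q
  · exact ⟨p, q, q, not_isIndepSet_of_adj hpq (by simp) (by simp),
      not_isIndepSet_of_adj hpq' (by simp) (by simp)⟩
  by_cases hrs' : Γ₀.Adj r s
  · exact ⟨r, s, s, not_isIndepSet_of_adj hrs' (by simp) (by simp),
      not_isIndepSet_of_adj hrs (by simp) (by simp)⟩
  by_cases hpr : p = r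
  · subst hpr
    exact ⟨p, q, s, not_isIndepSet_of_adj hpq (by simp) (by simp),
      not_isIndepSet_of_adj hrs (by simp) (by simp)⟩
  have hp : p ∈ T := by grind [h hpq.ne]
  have hr : r ∈ T := by grind [h hrs.ne]
  have hcross : Γ₀.Adj p r ∨ Γ₁.Adj p r := by grind [h hpr]
  rcases hcross with hpr₀ | hpr₁
  · exact ⟨p, r, s, not_isIndepSet_of_adj hpr₀ (by simp) (by simp),
      not_isIndepSet_of_adj hrs (by simp) (by simp)⟩
  · exact ⟨p, r, q, not_isIndepSet_of_adj hpq (by simp) (by simp),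
      not_isIndepSet_of_adj hpr₁ (by simp) (by simp)⟩

lemma exists_three_not_isIndepSet_insert (h₀₁ : DifferByClique Γ₀ Γ₁ T)
    (h₂₁ : DifferByClique Γ₂ Γ₁ S) (hcT : c ∉ T) (hcS : c ∈ S) (h₀ : Γ₀ ≠ ⊥) (h₁ : Γ₁ ≠ ⊥)
    (h₂ : Γ₂ ≠ ⊥) :
    ∃ x y z, ¬ Γ₀.IsIndepSet {c, x, y, z} ∧ ¬ Γ₁.IsIndepSet {c, x, y, z} ∧
      ¬ Γ₂.IsIndepSet {c, x, y, z} := by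
  by_cases hneighbor : ∃ u, Γ₁.Adj c u
  · obtain ⟨u, hu⟩ := hneighbor
    have hu₀ : Γ₀.Adj c u := by grind [h₀₁ hu.ne]
    obtain ⟨p, q, hpq⟩ := SimpleGraph.ne_bot_iff_exists_adj.1 h₂
    exact ⟨u, p, q, not_isIndepSet_of_adj hu₀ (by simp) (by simp),
      not_isIndepSet_of_adj hu (by simp) (by simp), not_isIndepSet_of_adj hpq (by simp) (by simp)⟩
  have hisolated (u : V) : ¬ Γ₁.Adj c u := not_exists.1 hneighbor u
  obtain ⟨x, y, z, hX₀, hX₁⟩ := h₀₁.exists_three_not_isIndepSet h₀ h₁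
  have hsub : ({x, y, z} : Set V) ⊆ {c, x, y, z} := Set.subset_insert _ _
  refine ⟨x, y, z, fun h => hX₀ (h.mono hsub), fun h => hX₁ (h.mono hsub), fun h => hX₁ ?_⟩
  intro p hp q hq hpq hadj
  by_cases hpq₂ : Γ₂.Adj p q
  · exact h (hsub hp) (hsub hq) hpq hpq₂
  · have hpS : p ∈ S := by grind [h₂₁ hpq]
    have hcp : c ≠ p := fun hcp => hisolated q (hcp ▸ hadj)
    have hcp₂ : Γ₂.Adj c p := by grind [h₂₁ hcp]
    exact h (Set.mem_insert _ _) (hsub hp) hcp hcp₂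

end Clique

section Ltimes

instance : DecidableRel ltimesGraph.Adj := fun u v =>
  decidable_of_iff (s(u, v) ∈ ({s(0,1), s(0,2), s(0,3), s(0,4), s(3,4)} : Finset (Sym2 (Fin 5))) ∧
    u ≠ v) (by simp [ltimesGraph])

/-- The vertices of `⋉` whose rows determine every matrix of rank at most `3` with the pattern of a
graph containing `⋉`. -/
def ltimesBase : Fin 3 → Fin 5 :=
  ![0, 1, 3]

/-- The diagonals that a matrix over `F₂` of rank at most `3` with the pattern of `⋉` can have on
`ltimesBase`. -/
def ltimesDiag : Fin 3 → Fin 3 → ZMod 2 :=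
  ![![0, 0, 1], ![1, 0, 1], ![1, 1, 1]]

/-- The inverses of the submatrices on `ltimesBase` with the diagonals `ltimesDiag`. Those at
the indices `0` and `2` differ from the one at index `1` by rank-one matrices. -/
def ltimesBaseInv : Fin 3 → Matrix (Fin 3) (Fin 3) (ZMod 2) :=
  ![!![0, 1, 0; 1, 1, 1; 0, 1, 1], !![0, 1, 0; 1, 0, 1; 0, 1, 1], !![1, 1, 1; 1, 0, 1; 1, 1, 0]]

lemma ltimesBase_injective : ltimesBase.Injective := by
  decide

lemma exists_ltimesDiag_of_rank_le_three {δ : Fin 5 → ZMod 2}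
    (hrank : (ltimesGraph.adjMatrix (ZMod 2) + diagonal δ).rank ≤ 3) :
    ∃ i, δ ∘ ltimesBase = ltimesDiag i := by
  have hminor (r c : Fin 4 → Fin 5) :
      ((ltimesGraph.adjMatrix (ZMod 2) + diagonal δ).submatrix r c).det = 0 :=
    det_submatrix_eq_zero_of_rank_lt r c (Nat.lt_succ_of_le hrank)
  have hsolve : ∀ δ : Fin 5 → ZMod 2,
      ((ltimesGraph.adjMatrix (ZMod 2) + diagonal δ).submatrix
        ![0, 1, 2, 3] ![0, 1, 2, 3]).det = 0 →
      ((ltimesGraph.adjMatrix (ZMod 2) + diagonal δ).submatrix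
        ![0, 1, 3, 4] ![0, 2, 3, 4]).det = 0 →
      ∃ i, δ ∘ ltimesBase = ltimesDiag i := by
    decide +kernel
  exact hsolve δ (hminor _ _) (hminor _ _)

variable {V : Type*} [DecidableEq V] {G : SimpleGraph V} [DecidableRel G.Adj]

lemma baseCompletion_submatrix_ltimes_mul_inv (a : ltimesGraph ↪g G) (i : Fin 3) :
    (baseCompletion G (a ∘ ltimesBase) (ltimesDiag i)).submatrix
      (a ∘ ltimesBase) (a ∘ ltimesBase) * ltimesBaseInv i = 1 := by
  rw [← submatrix_submatrix, baseCompletion_submatrix_embedding a ltimesBase_injective,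
    baseCompletion_submatrix _ ltimesBase_injective]
  decide +revert

lemma isUnit_baseCompletion_submatrix_ltimes (a : ltimesGraph ↪g G) (i : Fin 3) :
    IsUnit ((baseCompletion G (a ∘ ltimesBase) (ltimesDiag i)).submatrix
      (a ∘ ltimesBase) (a ∘ ltimesBase)) :=
  .of_mul_eq_one _ (baseCompletion_submatrix_ltimes_mul_inv a i)

lemma minRank_le_three_iff [Fintype V] (a : ltimesGraph ↪g G) :
    minRank (ZMod 2) G ≤ 3 ↔ ∃ i, conflictGraph G (a ∘ ltimesBase) (ltimesDiag i) = ⊥ := by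
  have hinj : (a ∘ ltimesBase).Injective := a.injective.comp ltimesBase_injective
  have hdiag (i : Fin 3) :=
    exists_diagonal_rank_le_card_iff hinj (isUnit_baseCompletion_submatrix_ltimes a i)
  simp only [← hdiag, Fintype.card_fin, minRank_zmod_two_le_iff]
  constructor
  · rintro ⟨δ, hrank⟩
    have hcopy : (ltimesGraph.adjMatrix (ZMod 2) + diagonal (δ ∘ a)).rank ≤ 3 := by
      refine le_trans (le_of_eq_of_le ?_ (rank_submatrix_le _ a a)) hrank
      rw [submatrix_add, Pi.add_apply, Pi.add_apply, a.submatrix_adjMatrix (ZMod 2),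
        submatrix_diagonal _ _ a.injective]
    obtain ⟨i, hi⟩ := exists_ltimesDiag_of_rank_le_three hcopy
    exact ⟨i, δ, hi, hrank⟩
  · rintro ⟨_, δ, -, hrank⟩
    exact ⟨δ, hrank⟩

lemma differByClique_conflictGraph_ltimes (a : ltimesGraph ↪g G) {i i' : Fin 3} {w : Fin 3 → ZMod 2}
    (hw : ltimesBaseInv i = ltimesBaseInv i' + vecMulVec w w) :
    DifferByClique (conflictGraph G (a ∘ ltimesBase) (ltimesDiag i))
      (conflictGraph G (a ∘ ltimesBase) (ltimesDiag i'))
      {u | u ∉ Set.range (a ∘ ltimesBase) ∧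
        (G.adjMatrix (ZMod 2) u ∘ (a ∘ ltimesBase)) ⬝ᵥ w = 1} := by
  refine differByClique_conflictGraph (isUnit_baseCompletion_submatrix_ltimes a i)
    (isUnit_baseCompletion_submatrix_ltimes a i') ?_
  rwa [inv_eq_right_inv (baseCompletion_submatrix_ltimes_mul_inv a i),
    inv_eq_right_inv (baseCompletion_submatrix_ltimes_mul_inv a i')]

lemma exists_three_not_isIndepSet_conflictGraph (a : ltimesGraph ↪g G)
    (h : ∀ i, conflictGraph G (a ∘ ltimesBase) (ltimesDiag i) ≠ ⊥) :
    ∃ x y z, ∀ i,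
      ¬ (conflictGraph G (a ∘ ltimesBase) (ltimesDiag i)).IsIndepSet {a 2, x, y, z} := by
  have h₀₁ := differByClique_conflictGraph_ltimes a (i := 0) (i' := 1) (w := ![0, 1, 0]) (by decide)
  have h₂₁ := differByClique_conflictGraph_ltimes a (i := 2) (i' := 1) (w := ![1, 0, 1]) (by decide)
  have hrow : G.adjMatrix (ZMod 2) (a 2) ∘ (a ∘ ltimesBase) = ![1, 0, 0] := by
    have hcopy : ltimesGraph.adjMatrix (ZMod 2) 2 ∘ ltimesBase = ![1, 0, 0] := by decide
    rw [← hcopy, ← a.submatrix_adjMatrix (ZMod 2)]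
    rfl
  have hbase (j : Fin 3) : ltimesBase j ≠ 2 := by decide +revert
  obtain ⟨x, y, z, hX₀, hX₁, hX₂⟩ := exists_three_not_isIndepSet_insert (c := a 2) h₀₁ h₂₁
    (by simp [hrow]) (by simp [hrow, hbase]) (h 0) (h 1) (h 2)
  exact ⟨x, y, z, Fin.forall_fin_succ.2 ⟨hX₀, Fin.forall_fin_two.2 ⟨hX₁, hX₂⟩⟩⟩

lemma exists_isIndepSet_compl_of_minRank_deleteVert_le [Fintype V] (a : ltimesGraph ↪g G) {w : V}
    (hw : w ∉ Set.range a) (hrank : minRank (ZMod 2) (deleteVert G w) ≤ 3) :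
    ∃ i, (conflictGraph G (a ∘ ltimesBase) (ltimesDiag i)).IsIndepSet {w}ᶜ := by
  classical
  let e : deleteVert G w ↪g G := SimpleGraph.Embedding.comap (.subtype _) G
  let b : ltimesGraph ↪g deleteVert G w :=
    { toFun k := ⟨a k, fun hk => hw ⟨k, hk⟩⟩
      inj' _ _ hkl := a.injective (congrArg Subtype.val hkl)
      map_rel_iff' := a.map_adj_iff }
  obtain ⟨i, hi⟩ := (minRank_le_three_iff b).1 hrank
  rw [conflictGraph_eq_comap e (b.injective.comp ltimesBase_injective)] at hi
  refine ⟨i, fun u hu v hv _ huv => ?_⟩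
  have hadj : (SimpleGraph.comap e (conflictGraph G (a ∘ ltimesBase) (ltimesDiag i))).Adj
    ⟨u, hu⟩ ⟨v, hv⟩ := huv
  exact hi.le hadj

end Ltimes

/-- If `G ∈ F₄(F₂, ⋉)`, then `G` has at most 8 vertices. -/
theorem card_le_eight_of_forbRel_ltimes {V : Type*} [Fintype V] [DecidableEq V]
    (G : SimpleGraph V) (h : MemForbRel (ZMod 2) 4 ltimesGraph G) :
    Fintype.card V ≤ 8 := by
  classical
  obtain ⟨hG, a, ha⟩ := h
  have hconflict (i : Fin 3) : conflictGraph G (a ∘ ltimesBase) (ltimesDiag i) ≠ ⊥ := fun hi =>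
    hG.not_gt (Nat.lt_succ_of_le ((minRank_le_three_iff a).2 ⟨i, hi⟩))
  obtain ⟨x, y, z, hX⟩ := exists_three_not_isIndepSet_conflictGraph a hconflict
  by_contra! hcard
  have hsmall : (({x, y, z} : Finset V) ∪ Finset.univ.image a).card ≤ 3 + 5 :=
    (Finset.card_union_le _ _).trans (add_le_add Finset.card_le_three Finset.card_image_le)
  obtain ⟨w, -, hw⟩ := Finset.exists_mem_notMem_of_card_lt_card (hsmall.trans_lt hcard)
  have hwa : w ∉ Set.range a := by simp_all
  obtain ⟨i, hi⟩ :=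
    exists_isIndepSet_compl_of_minRank_deleteVert_le a hwa (Nat.le_of_succ_le_succ (ha w hwa))
  have hsub : ({a 2, x, y, z} : Set V) ⊆ {w}ᶜ := by
    rintro v (rfl | hv) rfl
    · exact hwa ⟨2, rfl⟩
    · simp_all
  exact hX i (hi.mono hsub)
end
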